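/- arXiv:2507.09252 — 6 statements merged into one kernel-verified Lean document; each statement's English description precedes it below -/
import Mathlib

section
/- Let μ be a σ-finite measure on a measurable space Ω, let p and q be probability densities with respect to μ, and let M > 0 satisfy p(x) ≤ M·q(x) for all x ∈ Ω. Let (τ̂, ε) be distributed according to the product of the probability measure with density q (with respect to μ) and the uniform distribution on [0,1]. Then for every measurable set A ⊆ Ω, the probability that τ̂ ∈ A and ε < p(τ̂)/(M·q(τ̂)) equals (1/M)·∫_A p dμ, where the ratio p(x)/(M·q(x)) is interpreted as 0 when q(x) = 0. -/
open MeasureTheory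

/-- Acceptance-rejection sampling: joint probability of landing in `A` and being
accepted equals `(1/M) * ∫_A p dμ`. -/
theorem acceptance_rejection_joint_prob
    {Ω : Type*} [MeasurableSpace Ω] (μ : Measure Ω) [SigmaFinite μ]
    (p q : Ω → ℝ) (hpm : Measurable p) (hqm : Measurable q)
    (hp0 : ∀ x, 0 ≤ p x) (hq0 : ∀ x, 0 ≤ q x)
    (hp1 : ∫ x, p x ∂μ = 1) (hq1 : ∫ x, q x ∂μ = 1)
    (M : ℝ) (hM : 0 < M) (hbound : ∀ x, p x ≤ M * q x)
    (A : Set Ω) (hA : MeasurableSet A) :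
    ((μ.withDensity fun x => ENNReal.ofReal (q x)).prod
        (volume.restrict (Set.Icc (0 : ℝ) 1)))
      {ω : Ω × ℝ | ω.1 ∈ A ∧ ω.2 < p ω.1 / (M * q ω.1)}
      = ENNReal.ofReal ((1 / M) * ∫ x in A, p x ∂μ) := by
  have hpi : Integrable p μ := by
    by_contra h
    rw [integral_undef h] at hp1
    exact zero_ne_one hp1
  have hrm : Measurable fun x => p x / (M * q x) := hpm.div (hqm.const_mul M)
  have hS : MeasurableSet {ω : Ω × ℝ | ω.1 ∈ A ∧ ω.2 < p ω.1 / (M * q ω.1)} :=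
    (measurable_fst hA).inter (measurableSet_lt measurable_snd (hrm.comp measurable_fst))
  have hslice : ∀ x, (volume.restrict (Set.Icc (0 : ℝ) 1))
      (Prod.mk x ⁻¹' {ω : Ω × ℝ | ω.1 ∈ A ∧ ω.2 < p ω.1 / (M * q ω.1)})
      = A.indicator (fun x => ENNReal.ofReal (p x / (M * q x))) x := by
    intro x
    by_cases hx : x ∈ A
    · have h1 : p x / (M * q x) ≤ 1 :=
        div_le_one_of_le₀ (hbound x) (mul_nonneg hM.le (hq0 x))
      have h2 : Prod.mk x ⁻¹' {ω : Ω × ℝ | ω.1 ∈ A ∧ ω.2 < p ω.1 / (M * q ω.1)}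
          = Set.Iio (p x / (M * q x)) := by
        ext y; simp [hx]
      have h3 : Set.Iio (p x / (M * q x)) ∩ Set.Icc (0 : ℝ) 1
          = Set.Ico 0 (p x / (M * q x)) := by
        ext y
        simp only [Set.mem_inter_iff, Set.mem_Iio, Set.mem_Icc, Set.mem_Ico]
        constructor
        · rintro ⟨a, b, c⟩; exact ⟨b, a⟩
        · rintro ⟨a, b⟩; exact ⟨b, a, by linarith⟩
      rw [h2, Measure.restrict_apply measurableSet_Iio, h3, Real.volume_Ico, sub_zero,
        Set.indicator_of_mem hx]
    · have h2 : Prod.mk x ⁻¹' {ω : Ω × ℝ | ω.1 ∈ A ∧ ω.2 < p ω.1 / (M * q ω.1)} = ∅ := by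
        ext y; simp [hx]
      rw [h2, measure_empty, Set.indicator_of_notMem hx]
  rw [Measure.prod_apply hS]
  simp_rw [hslice]
  rw [lintegral_indicator hA, restrict_withDensity hA,
    lintegral_withDensity_eq_lintegral_mul _ hqm.ennreal_ofReal hrm.ennreal_ofReal,
    ← integral_const_mul,
    ofReal_integral_eq_lintegral_ofReal (hpi.restrict.const_mul _)
      (Filter.Eventually.of_forall fun x => mul_nonneg (by positivity) (hp0 x))]
  refine lintegral_congr fun x => ?_
  simp only [Pi.mul_apply]
  rw [← ENNReal.ofReal_mul (hq0 x)]
  congr 1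
  by_cases h : q x = 0
  · have : p x = 0 := le_antisymm (by simpa [h] using hbound x) (hp0 x)
    simp [h, this]
  · field_simp
end

section
/- Let μ be a σ-finite measure on a measurable space Ω, let p and q be probability densities with respect to μ, and let M > 0 satisfy p(x) ≤ M·q(x) for all x ∈ Ω. Let (τ̂, ε) be distributed according to the product of the probability measure with density q (with respect to μ) and the uniform distribution on [0,1]. Then the probability of the acceptance event {ε < p(τ̂)/(M·q(τ̂))} equals 1/M, where the ratio p(x)/(M·q(x)) is interpreted as 0 when q(x) = 0. -/
open MeasureTheory

/-- Acceptance-rejection sampling: the probability of the acceptance event equals `1/M`. -/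
theorem acceptance_rejection_accept_prob
    {Ω : Type*} [MeasurableSpace Ω] (μ : Measure Ω) [SigmaFinite μ]
    (p q : Ω → ℝ) (hpm : Measurable p) (hqm : Measurable q)
    (hp0 : ∀ x, 0 ≤ p x) (hq0 : ∀ x, 0 ≤ q x)
    (hp1 : ∫ x, p x ∂μ = 1) (hq1 : ∫ x, q x ∂μ = 1)
    (M : ℝ) (hM : 0 < M) (hbound : ∀ x, p x ≤ M * q x) :
    ((μ.withDensity fun x => ENNReal.ofReal (q x)).prod
        (volume.restrict (Set.Icc (0 : ℝ) 1)))
      {ω : Ω × ℝ | ω.2 < p ω.1 / (M * q ω.1)}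
      = ENNReal.ofReal (1 / M) := by
  have hms : MeasurableSet {ω : Ω × ℝ | ω.2 < p ω.1 / (M * q ω.1)} :=
    measurableSet_lt measurable_snd
      ((hpm.comp measurable_fst).div ((hqm.comp measurable_fst).const_mul M))
  have hslice : ∀ x, (volume.restrict (Set.Icc (0 : ℝ) 1))
      (Prod.mk x ⁻¹' {ω : Ω × ℝ | ω.2 < p ω.1 / (M * q ω.1)})
      = ENNReal.ofReal (p x / (M * q x)) := by
    intro x
    have h1 : p x / (M * q x) ≤ 1 :=
      div_le_one_of_le₀ (hbound x) (mul_nonneg hM.le (hq0 x))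
    have e : Prod.mk x ⁻¹' {ω : Ω × ℝ | ω.2 < p ω.1 / (M * q ω.1)}
        = Set.Iio (p x / (M * q x)) := rfl
    rw [e, Measure.restrict_apply measurableSet_Iio]
    have e2 : Set.Iio (p x / (M * q x)) ∩ Set.Icc (0 : ℝ) 1
        = Set.Ico 0 (p x / (M * q x)) := by
      ext y
      simp only [Set.mem_inter_iff, Set.mem_Iio, Set.mem_Icc, Set.mem_Ico]
      constructor
      · rintro ⟨a, b, c⟩
        exact ⟨b, a⟩
      · rintro ⟨a, b⟩
        exact ⟨b, a, by linarith⟩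
    rw [e2, Real.volume_Ico, sub_zero]
  rw [Measure.prod_apply hms]
  simp_rw [hslice]
  have hmr : Measurable fun x => ENNReal.ofReal (p x / (M * q x)) :=
    (hpm.div (hqm.const_mul M)).ennreal_ofReal
  rw [lintegral_withDensity_eq_lintegral_mul _ hqm.ennreal_ofReal hmr]
  have hpt : ∀ x, ((fun x => ENNReal.ofReal (q x)) *
      fun x => ENNReal.ofReal (p x / (M * q x))) x = ENNReal.ofReal (p x / M) := by
    intro x
    simp only [Pi.mul_apply]
    rw [← ENNReal.ofReal_mul (hq0 x)]
    congr 1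
    rcases eq_or_ne (q x) 0 with h | h
    · have h2 := hbound x
      have h3 : p x = 0 := le_antisymm (by simpa [h] using h2) (hp0 x)
      simp [h, h3]
    · field_simp
  rw [lintegral_congr hpt]
  have hpi : Integrable p μ := by
    by_contra h
    rw [integral_undef h] at hp1
    exact zero_ne_one hp1
  rw [← ofReal_integral_eq_lintegral_ofReal (hpi.div_const M)
    (Filter.Eventually.of_forall fun x => div_nonneg (hp0 x) hM.le),
    integral_div, hp1]
end

section
/- Let μ be a σ-finite measure on a measurable space Ω, let p and q be probability densities with respect to μ, and let M > 0 satisfy p(x) ≤ M·q(x) for all x ∈ Ω. Let (τ̂, ε) be distributed according to the product of the probability measure with density q (with respect to μ) and the uniform distribution on [0,1], and let the acceptance event be {ε < p(τ̂)/(M·q(τ̂))} (ratio interpreted as 0 when q(x) = 0). Then for every measurable set A ⊆ Ω, the conditional probability that τ̂ ∈ A given the acceptance event equals ∫_A p dμ. In particular, the conditional law of the accepted sample is the probability measure with density p. -/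
open MeasureTheory

lemma accept_aux
    {Ω : Type*} [MeasurableSpace Ω] (μ : Measure Ω)
    (p q : Ω → ℝ) (hpm : Measurable p) (hqm : Measurable q)
    (hp0 : ∀ x, 0 ≤ p x) (hq0 : ∀ x, 0 ≤ q x)
    (hp1 : ∫ x, p x ∂μ = 1)
    (M : ℝ) (hM : 0 < M) (hbound : ∀ x, p x ≤ M * q x)
    (A : Set Ω) (hA : MeasurableSet A) :
    ((μ.withDensity fun x => ENNReal.ofReal (q x)).prod
        (volume.restrict (Set.Icc (0 : ℝ) 1)))
      {ω : Ω × ℝ | ω.1 ∈ A ∧ ω.2 < p ω.1 / (M * q ω.1)}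
    = ENNReal.ofReal M⁻¹ * ENNReal.ofReal (∫ x in A, p x ∂μ) := by
  have hint : Integrable p μ := by
    by_contra h
    rw [integral_undef h] at hp1
    exact zero_ne_one hp1
  have hms : MeasurableSet {ω : Ω × ℝ | ω.1 ∈ A ∧ ω.2 < p ω.1 / (M * q ω.1)} := by
    apply MeasurableSet.inter
    · exact measurable_fst hA
    · have ha : Measurable (fun ω : Ω × ℝ => ω.2) := measurable_snd
      have hb : Measurable (fun ω : Ω × ℝ => p ω.1 / (M * q ω.1)) := by fun_prop
      exact measurableSet_lt ha hb
  rw [Measure.prod_apply hms, lintegral_withDensity_eq_lintegral_mul _ (by fun_prop)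
    (measurable_measure_prodMk_left hms)]
  have key : ∀ x, ((fun x => ENNReal.ofReal (q x)) * fun x =>
      (volume.restrict (Set.Icc (0 : ℝ) 1)) (Prod.mk x ⁻¹'
        {ω : Ω × ℝ | ω.1 ∈ A ∧ ω.2 < p ω.1 / (M * q ω.1)})) x
      = A.indicator (fun x => ENNReal.ofReal M⁻¹ * ENNReal.ofReal (p x)) x := by
    intro x
    simp only [Pi.mul_apply]
    by_cases hx : x ∈ A
    · rw [Set.indicator_of_mem hx]
      have hr1 : p x / (M * q x) ≤ 1 :=
        div_le_one_of_le₀ (hbound x) (mul_nonneg hM.le (hq0 x))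
      have hset : (Prod.mk x ⁻¹' {ω : Ω × ℝ | ω.1 ∈ A ∧ ω.2 < p ω.1 / (M * q ω.1)})
          = Set.Iio (p x / (M * q x)) := by
        ext y; simp [hx]
      have hset2 : Set.Iio (p x / (M * q x)) ∩ Set.Icc (0:ℝ) 1
          = Set.Ico 0 (p x / (M * q x)) := by
        ext y
        simp only [Set.mem_inter_iff, Set.mem_Iio, Set.mem_Icc, Set.mem_Ico]
        constructor
        · rintro ⟨h1, h2, h3⟩
          exact ⟨h2, h1⟩
        · rintro ⟨h1, h2⟩
          exact ⟨h2, h1, by linarith⟩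
      rw [hset, Measure.restrict_apply measurableSet_Iio, hset2, Real.volume_Ico, sub_zero,
        ← ENNReal.ofReal_mul (hq0 x), ← ENNReal.ofReal_mul (inv_nonneg.2 hM.le)]
      congr 1
      rcases (hq0 x).eq_or_lt with h | h
      · have h2 := hbound x
        rw [← h, mul_zero] at h2
        have h3 : p x = 0 := le_antisymm h2 (hp0 x)
        simp [h3]
      · field_simp
    · rw [Set.indicator_of_notMem hx]
      simp [hx]
  rw [lintegral_congr key, lintegral_indicator hA, lintegral_const_mul _ (by fun_prop),
    ofReal_integral_eq_lintegral_ofReal hint.integrableOn (Filter.Eventually.of_forall hp0)]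

/-- Acceptance-rejection sampling: the conditional law of the accepted sample is the
probability measure with density `p`. -/
theorem acceptance_rejection_conditional_law
    {Ω : Type*} [MeasurableSpace Ω] (μ : Measure Ω) [SigmaFinite μ]
    (p q : Ω → ℝ) (hpm : Measurable p) (hqm : Measurable q)
    (hp0 : ∀ x, 0 ≤ p x) (hq0 : ∀ x, 0 ≤ q x)
    (hp1 : ∫ x, p x ∂μ = 1) (hq1 : ∫ x, q x ∂μ = 1)
    (M : ℝ) (hM : 0 < M) (hbound : ∀ x, p x ≤ M * q x)
    (A : Set Ω) (hA : MeasurableSet A) :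
    ((μ.withDensity fun x => ENNReal.ofReal (q x)).prod
        (volume.restrict (Set.Icc (0 : ℝ) 1)))
      {ω : Ω × ℝ | ω.1 ∈ A ∧ ω.2 < p ω.1 / (M * q ω.1)}
    / ((μ.withDensity fun x => ENNReal.ofReal (q x)).prod
        (volume.restrict (Set.Icc (0 : ℝ) 1)))
      {ω : Ω × ℝ | ω.2 < p ω.1 / (M * q ω.1)}
      = ENNReal.ofReal (∫ x in A, p x ∂μ) := by
  have h1 := accept_aux μ p q hpm hqm hp0 hq0 hp1 M hM hbound A hA
  have h2 := accept_aux μ p q hpm hqm hp0 hq0 hp1 M hM hbound Set.univ MeasurableSet.univ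
  simp only [Set.mem_univ, true_and, Measure.restrict_univ, hp1, ENNReal.ofReal_one,
    mul_one] at h2
  rw [h1, h2, mul_comm]
  exact ENNReal.mul_div_cancel_right (by simpa using hM) ENNReal.ofReal_ne_top
end

section
/- Let g_T and g_D be probability densities with respect to a σ-finite measure μ on a measurable space Ω, let β := ∫_Ω min(g_T, g_D) dμ, assume β < 1, and define g'(x) := max(0, g_T(x) − g_D(x))/(1 − β). On the product space Ω × [0,1] × Ω equipped with the product of the measure with density g_D, the uniform distribution on [0,1], and the measure with density g', define the output Y(τ̂, ε, τ') := τ̂ if ε < min(1, g_T(τ̂)/g_D(τ̂)) (ratio interpreted as 0 when g_D(τ̂) = 0) and Y(τ̂, ε, τ') := τ' otherwise. Then the law of Y is the probability measure with density g_T with respect to μ; equivalently, for every measurable set A ⊆ Ω, P(Y ∈ A) = ∫_A g_T dμ. -/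
open MeasureTheory

/-- One-step speculative decoding: propose `τ̂ ~ g_D`, accept with probability
`min(1, g_T(τ̂)/g_D(τ̂))`, otherwise resample `τ'` from the adjusted density `g'`.
The output is distributed according to the target density `g_T`. -/
theorem speculative_decoding_output_law
    {Ω : Type*} [MeasurableSpace Ω] (μ : Measure Ω) [SigmaFinite μ]
    (gT gD : Ω → ℝ) (hTm : Measurable gT) (hDm : Measurable gD)
    (hT0 : ∀ x, 0 ≤ gT x) (hD0 : ∀ x, 0 ≤ gD x)
    (hT1 : ∫ x, gT x ∂μ = 1) (hD1 : ∫ x, gD x ∂μ = 1)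
    (β : ℝ) (hβ : β = ∫ x, min (gT x) (gD x) ∂μ) (hβ1 : β < 1)
    (g' : Ω → ℝ) (hg' : ∀ x, g' x = max 0 (gT x - gD x) / (1 - β))
    (A : Set Ω) (hA : MeasurableSet A) :
    ((μ.withDensity fun x => ENNReal.ofReal (gD x)).prod
        ((volume.restrict (Set.Icc (0 : ℝ) 1)).prod
          (μ.withDensity fun x => ENNReal.ofReal (g' x))))
      {ω : Ω × ℝ × Ω |
        (if ω.2.1 < min 1 (gT ω.1 / gD ω.1) then ω.1 else ω.2.2) ∈ A}
      = ENNReal.ofReal (∫ x in A, gT x ∂μ) := by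
  have hTi : Integrable gT μ := by
    by_contra h; rw [integral_undef h] at hT1; norm_num at hT1
  have hDi : Integrable gD μ := by
    by_contra h; rw [integral_undef h] at hD1; norm_num at hD1
  have hmi : Integrable (fun x => min (gT x) (gD x)) μ := hTi.inf hDi
  have hpos : 0 < 1 - β := by linarith
  set c := ENNReal.ofReal (1 - β) with hc
  have hc0 : c ≠ 0 := by simpa [hc] using hβ1
  have hct : c ≠ ⊤ := ENNReal.ofReal_ne_top
  have hg'm : Measurable g' := by
    have : g' = fun x => max 0 (gT x - gD x) / (1 - β) := funext hg'
    rw [this]; fun_prop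
  have hmax : ∀ x, max 0 (gT x - gD x) = gT x - min (gT x) (gD x) := by
    intro x
    rcases le_total (gT x) (gD x) with h | h
    · rw [min_eq_left h, max_eq_left (by linarith)]; ring
    · rw [min_eq_right h, max_eq_right (by linarith)]
  have hcP : ∀ B : Set Ω, MeasurableSet B →
      c * (μ.withDensity fun x => ENNReal.ofReal (g' x)) B
        = ∫⁻ x in B, ENNReal.ofReal (gT x - min (gT x) (gD x)) ∂μ := by
    intro B hB
    rw [withDensity_apply _ hB, ← lintegral_const_mul _ (by fun_prop)]
    refine lintegral_congr fun x => ?_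
    rw [hc, ← ENNReal.ofReal_mul hpos.le, hg', hmax, mul_div_cancel₀ _ hpos.ne']
  have hP1 : (μ.withDensity fun x => ENNReal.ofReal (g' x)) Set.univ = 1 := by
    have h := hcP Set.univ MeasurableSet.univ
    rw [Measure.restrict_univ, ← ofReal_integral_eq_lintegral_ofReal (f := fun x => gT x - min (gT x) (gD x)) (hTi.sub hmi)
      (Filter.Eventually.of_forall fun x => sub_nonneg.2 (min_le_left _ _)),
      integral_sub hTi hmi, hT1, ← hβ, ← hc] at h
    exact (ENNReal.mul_right_inj hc0 hct).1 (by rw [h, mul_one])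
  have hDc : ∫⁻ x, ENNReal.ofReal (gD x - min (gT x) (gD x)) ∂μ = c := by
    rw [← ofReal_integral_eq_lintegral_ofReal (f := fun x => gD x - min (gT x) (gD x)) (hDi.sub hmi)
      (Filter.Eventually.of_forall fun x => sub_nonneg.2 (min_le_right _ _)),
      integral_sub hDi hmi, hD1, ← hβ]
  have hcPA := hcP A hA
  set P := μ.withDensity fun x => ENNReal.ofReal (g' x) with hP
  have : IsProbabilityMeasure P := ⟨hP1⟩
  have hS : MeasurableSet {ω : Ω × ℝ × Ω |
        (if ω.2.1 < min 1 (gT ω.1 / gD ω.1) then ω.1 else ω.2.2) ∈ A} := by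
    have : Measurable fun ω : Ω × ℝ × Ω =>
        (if ω.2.1 < min 1 (gT ω.1 / gD ω.1) then ω.1 else ω.2.2) := by
      refine Measurable.ite (measurableSet_lt (by fun_prop) (by fun_prop)) (by fun_prop)
        (by fun_prop)
    exact this hA
  have hslice : ∀ x, ((volume.restrict (Set.Icc (0 : ℝ) 1)).prod P)
      (Prod.mk x ⁻¹' {ω : Ω × ℝ × Ω |
        (if ω.2.1 < min 1 (gT ω.1 / gD ω.1) then ω.1 else ω.2.2) ∈ A})
      = A.indicator (fun x => ENNReal.ofReal (min 1 (gT x / gD x))) x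
        + ENNReal.ofReal (1 - min 1 (gT x / gD x)) * P A := by
    intro x
    have ha0 : 0 ≤ min 1 (gT x / gD x) := le_min zero_le_one (div_nonneg (hT0 x) (hD0 x))
    have ha1 : min 1 (gT x / gD x) ≤ 1 := min_le_left _ _
    set a := min 1 (gT x / gD x) with ha
    have h1 : (volume.restrict (Set.Icc (0 : ℝ) 1)) (Set.Iio a) = ENNReal.ofReal a := by
      rw [Measure.restrict_apply measurableSet_Iio]
      have : Set.Iio a ∩ Set.Icc 0 1 = Set.Ico 0 a := by
        ext y; simp only [Set.mem_inter_iff, Set.mem_Iio, Set.mem_Icc, Set.mem_Ico]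
        constructor
        · rintro ⟨h, h', _⟩; exact ⟨h', h⟩
        · rintro ⟨h, h'⟩; exact ⟨h', h, by linarith⟩
      rw [this, Real.volume_Ico, sub_zero]
    have h2 : (volume.restrict (Set.Icc (0 : ℝ) 1)) (Set.Ici a) = ENNReal.ofReal (1 - a) := by
      rw [Measure.restrict_apply measurableSet_Ici]
      have : Set.Ici a ∩ Set.Icc 0 1 = Set.Icc a 1 := by
        ext y; simp only [Set.mem_inter_iff, Set.mem_Ici, Set.mem_Icc]
        constructor
        · rintro ⟨h, _, h'⟩; exact ⟨h, h'⟩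
        · rintro ⟨h, h'⟩; exact ⟨h, by linarith, h'⟩
      rw [this, Real.volume_Icc]
    by_cases hx : x ∈ A
    · have : (Prod.mk x ⁻¹' {ω : Ω × ℝ × Ω |
          (if ω.2.1 < min 1 (gT ω.1 / gD ω.1) then ω.1 else ω.2.2) ∈ A})
          = Set.Iio a ×ˢ Set.univ ∪ Set.Ici a ×ˢ A := by
        ext ⟨e, y⟩
        simp only [Set.mem_preimage, Set.mem_ofPred_eq, ← ha, Set.mem_union, Set.mem_prod,
          Set.mem_Iio, Set.mem_Ici, Set.mem_univ, and_true]
        by_cases h : e < a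
        · simp [h, hx]
        · simp [h, not_lt.1 h]
      rw [this, measure_union _ (measurableSet_Ici.prod hA), Measure.prod_prod,
        Measure.prod_prod, h1, h2, hP1, mul_one, Set.indicator_of_mem hx]
      rw [Set.disjoint_left]
      rintro ⟨e, y⟩ h h'
      exact absurd (Set.mem_Iio.1 h.1) (not_lt.2 (Set.mem_Ici.1 h'.1))
    · have : (Prod.mk x ⁻¹' {ω : Ω × ℝ × Ω |
          (if ω.2.1 < min 1 (gT ω.1 / gD ω.1) then ω.1 else ω.2.2) ∈ A})
          = Set.Ici a ×ˢ A := by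
        ext ⟨e, y⟩
        simp only [Set.mem_preimage, Set.mem_ofPred_eq, ← ha, Set.mem_prod, Set.mem_Ici]
        by_cases h : e < a
        · simp [h, hx]
        · simp [h, not_lt.1 h]
      rw [this, Measure.prod_prod, h2, Set.indicator_of_notMem hx, zero_add]
  have hmul : ∀ x, gD x * min 1 (gT x / gD x) = min (gT x) (gD x) := by
    intro x
    rcases (hD0 x).eq_or_lt with h | h
    · rw [← h, zero_mul, min_eq_right (hT0 x)]
    · rw [mul_min_of_nonneg _ _ h.le, mul_one, mul_div_cancel₀ _ h.ne', min_comm]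
  rw [Measure.prod_apply hS]
  simp_rw [hslice]
  have hFm : Measurable fun x =>
      A.indicator (fun x => ENNReal.ofReal (min 1 (gT x / gD x))) x
        + ENNReal.ofReal (1 - min 1 (gT x / gD x)) * P A :=
    ((by fun_prop : Measurable fun x => ENNReal.ofReal (min 1 (gT x / gD x))).indicator hA).add
      (by fun_prop)
  rw [lintegral_withDensity_eq_lintegral_mul _ (by fun_prop) hFm]
  have hpt : ∀ x, ((fun x => ENNReal.ofReal (gD x)) * fun x =>
      A.indicator (fun x => ENNReal.ofReal (min 1 (gT x / gD x))) x
        + ENNReal.ofReal (1 - min 1 (gT x / gD x)) * P A) x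
      = A.indicator (fun x => ENNReal.ofReal (min (gT x) (gD x))) x
        + ENNReal.ofReal (gD x - min (gT x) (gD x)) * P A := by
    intro x
    simp only [Pi.mul_apply]
    rw [mul_add, ← mul_assoc, ← ENNReal.ofReal_mul (hD0 x), mul_sub, mul_one, hmul]
    congr 1
    by_cases hx : x ∈ A
    · simp only [Set.indicator_of_mem hx]
      rw [← ENNReal.ofReal_mul (hD0 x), hmul]
    · simp [Set.indicator_of_notMem hx]
  rw [lintegral_congr hpt, lintegral_add_left
    ((by fun_prop : Measurable fun x => ENNReal.ofReal (min (gT x) (gD x))).indicator hA),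
    lintegral_indicator hA, lintegral_mul_const _ (by fun_prop), hDc, hcPA,
    ← lintegral_add_left (by fun_prop), ofReal_integral_eq_lintegral_ofReal hTi.restrict
      (Filter.Eventually.of_forall hT0)]
  refine lintegral_congr fun x => ?_
  rw [← ENNReal.ofReal_add (le_min (hT0 x) (hD0 x)) (sub_nonneg.2 (min_le_left _ _))]
  congr 1
  ring
end

section
/- Let K be a finite type, let f_T and f_D be probability mass functions on K, let β := ∑_{k ∈ K} min(f_T(k), f_D(k)), assume β < 1, and define f'(k) := max(0, f_T(k) − f_D(k))/(1 − β). Then for every k ∈ K, min(1, f_T(k)/f_D(k))·f_D(k) + (1 − β)·f'(k) = f_T(k), where the ratio f_T(k)/f_D(k) is interpreted as 0 when f_D(k) = 0 and where in that case the first summand is 0. In particular, for k with f_D(k) = 0 the identity reads (1 − β)·f'(k) = f_T(k). -/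
/-- Pointwise identity for discrete speculative decoding:
`min(1, f_T(k)/f_D(k))·f_D(k) + (1 − β)·f'(k) = f_T(k)` for every `k`
(in Lean, `f_T k / f_D k = 0` when `f_D k = 0`, so the first summand vanishes there
and the identity reads `(1 − β)·f'(k) = f_T(k)` in that case). -/
theorem discrete_speculative_decoding_pointwise_identity
    {K : Type*} [Fintype K]
    (fT fD : K → ℝ) (hT0 : ∀ k, 0 ≤ fT k) (hD0 : ∀ k, 0 ≤ fD k)
    (hT1 : ∑ k, fT k = 1) (hD1 : ∑ k, fD k = 1)
    (β : ℝ) (hβ : β = ∑ k, min (fT k) (fD k)) (hβ1 : β < 1)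
    (f' : K → ℝ) (hf' : ∀ k, f' k = max 0 (fT k - fD k) / (1 - β)) :
    ∀ k, min 1 (fT k / fD k) * fD k + (1 - β) * f' k = fT k := by
  intro k
  have h1 : (1 - β) ≠ 0 := by linarith
  rw [hf' k, mul_div_cancel₀ _ h1]
  rcases (hD0 k).eq_or_lt with h | h
  · rw [← h]
    simp [hT0 k]
  · rw [min_mul_of_nonneg _ _ h.le, div_mul_cancel₀ _ h.ne', one_mul]
    rcases le_total (fT k) (fD k) with h2 | h2
    · rw [min_eq_right h2, max_eq_left (by linarith)]
      ring
    · rw [min_eq_left h2, max_eq_right (by linarith)]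
      ring
end

section
/- Let K be a finite type, let f_T and f_D be probability mass functions on K, let β := ∑_{k ∈ K} min(f_T(k), f_D(k)), assume β < 1, and define f'(k) := max(0, f_T(k) − f_D(k))/(1 − β). On the product probability space K × [0,1] × K carrying the product of the f_D-distribution, the uniform distribution on [0,1], and the f'-distribution, define the output Y(z, ε, z') := z if ε < min(1, f_T(z)/f_D(z)) (ratio interpreted as 0 when f_D(z) = 0) and Y(z, ε, z') := z' otherwise. Then for every k ∈ K, P(Y = k) = f_T(k); that is, the speculative-decoding procedure for event types outputs samples distributed exactly according to the target probability mass function f_T. -/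
open MeasureTheory

lemma sd_lintegral {K : Type*} [Fintype K] [MeasurableSpace K] [MeasurableSingletonClass K]
    (f : K → ℝ) (g : K → ENNReal) :
    ∫⁻ z, g z ∂(Measure.count.withDensity fun j => ENNReal.ofReal (f j))
      = ∑ z, ENNReal.ofReal (f z) * g z := by
  rw [lintegral_withDensity_eq_lintegral_mul _ (measurable_of_finite _) (measurable_of_finite _),
    lintegral_count, tsum_fintype]
  rfl

open Classical in
lemma sd_vol {K : Type*} (a : ℝ) (h0 : 0 ≤ a) (h1 : a ≤ 1) (z z' k : K) :
    (volume.restrict (Set.Icc (0 : ℝ) 1)) {e : ℝ | (if e < a then z else z') = k}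
      = ENNReal.ofReal ((if z = k then a else 0) + (if z' = k then 1 - a else 0)) := by
  rw [Measure.restrict_apply' measurableSet_Icc]
  by_cases hz : z = k <;> by_cases hz' : z' = k
  · have : {e : ℝ | (if e < a then z else z') = k} ∩ Set.Icc 0 1 = Set.Icc 0 1 := by
      ext e; simp [hz, hz']
    rw [this]; simp [hz, hz']
  · have : {e : ℝ | (if e < a then z else z') = k} ∩ Set.Icc 0 1 = Set.Ico 0 a := by
      ext e
      by_cases he : e < a
      · simp [hz, he]; intro _; linarith
      · simp [hz', he]
    rw [this]; simp [hz, hz']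
  · have : {e : ℝ | (if e < a then z else z') = k} ∩ Set.Icc 0 1 = Set.Icc a 1 := by
      ext e
      by_cases he : e < a
      · simp [hz, he]
      · simp only [Set.mem_inter_iff, Set.mem_setOf_eq, Set.mem_Icc, he, hz', if_false]
        constructor
        · rintro ⟨_, _, h⟩; exact ⟨not_lt.1 he, h⟩
        · rintro ⟨h, h'⟩; exact ⟨trivial, h0.trans h, h'⟩
    rw [this]; simp [hz, hz']
  · have : {e : ℝ | (if e < a then z else z') = k} ∩ Set.Icc 0 1 = ∅ := by
      ext e
      by_cases he : e < a <;> simp [hz, hz', he]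
    rw [this]; simp [hz, hz']

/-- One-step speculative decoding for event types: propose `z ~ f_D`, accept with
probability `min(1, f_T(z)/f_D(z))`, otherwise resample `z'` from the adjusted pmf `f'`.
The output is distributed exactly according to the target pmf `f_T`. -/
theorem discrete_speculative_decoding_output_law
    {K : Type*} [Fintype K] [MeasurableSpace K] [MeasurableSingletonClass K]
    (fT fD : K → ℝ) (hT0 : ∀ k, 0 ≤ fT k) (hD0 : ∀ k, 0 ≤ fD k)
    (hT1 : ∑ k, fT k = 1) (hD1 : ∑ k, fD k = 1)
    (β : ℝ) (hβ : β = ∑ k, min (fT k) (fD k)) (hβ1 : β < 1)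
    (f' : K → ℝ) (hf' : ∀ k, f' k = max 0 (fT k - fD k) / (1 - β)) :
    ∀ k : K,
      ((Measure.count.withDensity fun j => ENNReal.ofReal (fD j)).prod
        ((volume.restrict (Set.Icc (0 : ℝ) 1)).prod
          (Measure.count.withDensity fun j => ENNReal.ofReal (f' j))))
        {ω : K × ℝ × K |
          (if ω.2.1 < min 1 (fT ω.1 / fD ω.1) then ω.1 else ω.2.2) = k}
        = ENNReal.ofReal (fT k) := by
  classical
  intro k
  have hb : 0 < 1 - β := by linarith
  have hf0 : ∀ j, 0 ≤ f' j := fun j => by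
    rw [hf']; exact div_nonneg (le_max_left _ _) hb.le
  have hmx : ∀ j, max 0 (fT j - fD j) = fT j - min (fT j) (fD j) := fun j => by
    rcases le_total (fT j) (fD j) with h | h
    · rw [min_eq_left h, max_eq_left (by linarith)]; ring
    · rw [min_eq_right h, max_eq_right (by linarith)]
  have hf1 : ∑ j, f' j = 1 := by
    simp only [hf', hmx]
    rw [← Finset.sum_div, Finset.sum_sub_distrib, hT1, ← hβ]
    exact div_self hb.ne'
  set a : K → ℝ := fun z => min 1 (fT z / fD z) with ha
  have ha0 : ∀ z, 0 ≤ a z := fun z => le_min zero_le_one (div_nonneg (hT0 z) (hD0 z))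
  have ha1 : ∀ z, a z ≤ 1 := fun z => min_le_left _ _
  have hDa : ∀ z, fD z * a z = min (fT z) (fD z) := fun z => by
    rcases (hD0 z).eq_or_lt with h | h
    · rw [← h, zero_mul, min_eq_right (hT0 z)]
    · simp only [ha]
      rw [mul_min_of_nonneg _ _ h.le, mul_div_cancel₀ _ h.ne', mul_one, min_comm]
  haveI : IsFiniteMeasure (Measure.count.withDensity fun j => ENNReal.ofReal (f' j)) :=
    ⟨by
      have := sd_lintegral f' (fun _ => 1)
      rw [lintegral_one] at this
      rw [this]
      exact ENNReal.sum_lt_top.2 (fun i _ => by simp)⟩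
  have hm : Measurable fun ω : K × ℝ × K => if ω.2.1 < a ω.1 then ω.1 else ω.2.2 := by
    refine Measurable.ite (measurableSet_lt (by fun_prop) ?_) (by fun_prop) (by fun_prop)
    exact (measurable_of_finite a).comp measurable_fst
  have hS : MeasurableSet {ω : K × ℝ × K | (if ω.2.1 < a ω.1 then ω.1 else ω.2.2) = k} :=
    hm (measurableSet_singleton k)
  change (Measure.prod _ _) {ω : K × ℝ × K | (if ω.2.1 < a ω.1 then ω.1 else ω.2.2) = k} = _
  rw [Measure.prod_apply hS, sd_lintegral]
  have key : ∀ z, ((volume.restrict (Set.Icc (0 : ℝ) 1)).prod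
          (Measure.count.withDensity fun j => ENNReal.ofReal (f' j)))
        (Prod.mk z ⁻¹' {ω : K × ℝ × K | (if ω.2.1 < a ω.1 then ω.1 else ω.2.2) = k})
      = ENNReal.ofReal ((if z = k then a z else 0) + f' k * (1 - a z)) := fun z => by
    rw [Measure.prod_apply_symm (measurable_prodMk_left hS), sd_lintegral]
    have : ∀ z', (volume.restrict (Set.Icc (0 : ℝ) 1)) ((fun x => (x, z')) ⁻¹'
        (Prod.mk z ⁻¹' {ω : K × ℝ × K | (if ω.2.1 < a ω.1 then ω.1 else ω.2.2) = k})) = _ :=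
      fun z' => sd_vol (a z) (ha0 z) (ha1 z) z z' k
    simp only [this, ← ENNReal.ofReal_mul (hf0 _)]
    rw [← ENNReal.ofReal_sum_of_nonneg]
    · congr 1
      simp only [mul_add, Finset.sum_add_distrib, ← Finset.sum_mul, hf1, one_mul]
      simp
    · intro z' _
      have := ha0 z
      have := ha1 z
      refine mul_nonneg (hf0 _) (add_nonneg ?_ ?_) <;> split_ifs <;> linarith
  simp only [key, ← ENNReal.ofReal_mul (hD0 _)]
  rw [← ENNReal.ofReal_sum_of_nonneg]
  · congr 1
    have e : ∀ z, fD z * ((if z = k then a z else 0) + f' k * (1 - a z))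
        = (if z = k then min (fT z) (fD z) else 0) + f' k * (fD z - min (fT z) (fD z)) := by
      intro z
      rw [← hDa]
      split_ifs <;> ring
    simp only [e, Finset.sum_add_distrib, ← Finset.mul_sum, Finset.sum_sub_distrib, hD1, ← hβ]
    rw [hf', div_mul_cancel₀ _ hb.ne', hmx]
    simp
  · intro z _
    have h1 := ha1 z
    refine mul_nonneg (hD0 _) (add_nonneg ?_ (mul_nonneg (hf0 _) (by linarith)))
    split_ifs
    · exact ha0 z
    · exact le_rfl
end
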